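/- For all nonnegative integers a_1, a_2, a_3, the constant term c_3(⟨a_1, a_2, a_3⟩; ⟨1, 0, −1⟩) satisfies (1 + a_1 + a_2) · a_1! a_2! a_3! · c_3(⟨a_1, a_2, a_3⟩; ⟨1, 0, −1⟩) = −a_3 · (a_1 + a_2 + a_3)!. -/

import Mathlib

/-- The polynomial `∏_{1 ≤ i ≠ j ≤ n} (x_j - x_i)^{a_j}` over `ℤ`. -/
noncomputable def dysonPoly (n : ℕ) (a : Fin n → ℕ) : MvPolynomial (Fin n) ℤ :=
  ∏ j : Fin n, ∏ i ∈ Finset.univ.erase j, (MvPolynomial.X j - MvPolynomial.X i) ^ a j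

/-- The constant term `c_n(a; b)` of the Laurent polynomial
`F_n(x; a; b) = ∏_h x_h^{-b_h} ∏_{1 ≤ i ≠ j ≤ n} (1 - x_i/x_j)^{a_j}`, i.e. the
coefficient of `∏_j x_j^{(n-1)a_j + b_j}` in `∏_{1 ≤ i ≠ j ≤ n} (x_j - x_i)^{a_j}`,
taken to be `0` if some exponent `(n-1)a_j + b_j` is negative. -/
noncomputable def dysonCT (n : ℕ) (a : Fin n → ℕ) (b : Fin n → ℤ) : ℤ :=
  if ∀ j, 0 ≤ ((n : ℤ) - 1) * a j + b j then
    MvPolynomial.coeff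
      (Finsupp.equivFunOnFinite.symm fun j => (((n : ℤ) - 1) * a j + b j).toNat)
      (dysonPoly n a)
  else 0

/-!
Good's argument. Lagrange interpolation of `x ^ (n - 1)` at `x_1, …, x_n` gives
`∑ k, x_k ^ (n - 1) / ∏ i ≠ k, (x_k - x_i) = 1`; multiplying by `∏_{i ≠ j} (x_j - x_i)^{a_j}` yields
`c_n(a; b) = ∑ k, c_n(a - e_k; b)` whenever all `a_k` are positive. If instead `a_k = 0`, then `x_k`
occurs only in the factors `(x_j - x_k)^{a_j}`, so reading off its power (`0` or `1`) expresses
`c_n(a; b)` through constant terms in the other `n - 1` variables. Dyson's multinomial formula for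
`b = 0` and Sills' closed form for `b = e_r - e_s` satisfy the same recurrence and boundary
conditions; the statement for three variables is Sills' formula with `r = 1` and `s = 3`.
-/

open MvPolynomial
open scoped Nat

section UpdatePred

theorem prod_apply_update {ι α M : Type*} [DecidableEq ι] [CommMonoid M] {s : Finset ι} {k : ι}
    (hk : k ∈ s) (g : ι → α → M) (a : ι → α) (x : α) :
    ∏ j ∈ s, g j (Function.update a k x j) = g k x * ∏ j ∈ s.erase k, g j (a j) := by
  rw [← Finset.mul_prod_erase _ _ hk, Function.update_self]
  congr 1
  refine Finset.prod_congr rfl fun j hj => ?_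
  rw [Function.update_of_ne (Finset.ne_of_mem_erase hj)]

theorem induction_on_update_pred {ι : Type*} [Finite ι] [DecidableEq ι] {P : (ι → ℕ) → Prop}
    (boundary : ∀ a k, a k = 0 → P a)
    (step : ∀ a, (∀ k, a k ≠ 0) → (∀ k, P (Function.update a k (a k - 1))) → P a)
    (a : ι → ℕ) : P a := by
  induction a using WellFoundedLT.induction with
  | _ a ih =>
    by_cases ha : ∀ k, a k ≠ 0
    · exact step a ha fun k => ih _ (update_lt_self_iff.mpr (Nat.sub_one_lt (ha k)))
    · obtain ⟨k, hk⟩ := not_forall_not.mp ha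
      exact boundary a k hk

variable {ι : Type*} [Fintype ι] [DecidableEq ι] {a : ι → ℕ} {k : ι}

theorem sum_update_pred_add_one (hk : a k ≠ 0) :
    ∑ j, Function.update a k (a k - 1) j + 1 = ∑ j, a j := by
  rw [Finset.sum_update_of_mem (Finset.mem_univ k),
    Finset.sum_eq_add_sum_sdiff_singleton_of_mem (Finset.mem_univ k) a]
  omega

theorem mul_prod_factorial_update_pred (hk : a k ≠ 0) :
    a k * ∏ j, (Function.update a k (a k - 1) j)! = ∏ j, (a j)! := by
  rw [prod_apply_update (Finset.mem_univ k) fun _ m => m !, ← mul_assoc,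
    Nat.mul_factorial_pred hk, Finset.mul_prod_erase _ (fun j => (a j)!) (Finset.mem_univ k)]

end UpdatePred

section RemoveNth

variable {n : ℕ}

theorem removeNth_single_succAbove {M : Type*} [Zero M] (k : Fin (n + 1)) (r : Fin n)
    (x : M) : k.removeNth (Pi.single (k.succAbove r) x : Fin (n + 1) → M) = Pi.single r x := by
  ext j
  simp [Fin.removeNth_apply, Pi.single_apply]

theorem removeNth_single_self {M : Type*} [Zero M] (k : Fin (n + 1)) (x : M) :
    k.removeNth (Pi.single k x : Fin (n + 1) → M) = 0 := by
  ext j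
  simp [Fin.removeNth_apply]

theorem sum_removeNth_of_eq_zero {M : Type*} [AddCommMonoid M] {a : Fin (n + 1) → M}
    {k : Fin (n + 1)} (hk : a k = 0) : ∑ j, k.removeNth a j = ∑ j, a j := by
  rw [Fin.sum_univ_succAbove a k, hk, zero_add]
  rfl

theorem prod_factorial_removeNth_of_eq_zero {a : Fin (n + 1) → ℕ} {k : Fin (n + 1)}
    (hk : a k = 0) : ∏ j, (k.removeNth a j)! = ∏ j, (a j)! := by
  rw [Fin.prod_univ_succAbove _ k, hk, Nat.factorial_zero, one_mul]
  rfl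

end RemoveNth

section LaurentCoeff

variable {σ R : Type*} [Fintype σ] [CommSemiring R]

/-- The coefficient of the Laurent monomial `∏ j, x_j ^ e j` in a polynomial. Integer exponents
let one shift by `∏ j, x_j ^ m j` freely; the coefficient is `0` once some exponent is negative. -/
noncomputable def laurentCoeff (e : σ → ℤ) : MvPolynomial σ R →ₗ[R] R :=
  if ∀ j, 0 ≤ e j then lcoeff R (Finsupp.equivFunOnFinite.symm fun j => (e j).toNat) else 0

theorem laurentCoeff_of_neg {e : σ → ℤ} {j : σ} (hj : e j < 0) (P : MvPolynomial σ R) :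
    laurentCoeff e P = 0 := by
  rw [laurentCoeff, if_neg fun h => (h j).not_gt hj, LinearMap.zero_apply]

theorem laurentCoeff_monomial (e : σ → ℤ) (m : σ →₀ ℕ) (c : R) :
    laurentCoeff e (monomial m c) = if (fun j => (m j : ℤ)) = e then c else 0 := by
  classical
  by_cases he : ∀ j, 0 ≤ e j
  · rw [laurentCoeff, if_pos he, lcoeff_apply, coeff_monomial]
    refine if_congr ?_ rfl rfl
    simp only [DFunLike.ext_iff, _root_.funext_iff, Finsupp.equivFunOnFinite_symm_apply_apply]
    exact forall_congr' fun j => by have := he j; omega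
  · obtain ⟨j, hj⟩ := not_forall.mp he
    rw [laurentCoeff_of_neg (not_le.mp hj), if_neg]
    rintro rfl
    exact hj (Int.natCast_nonneg _)

theorem laurentCoeff_monomial_mul (e : σ → ℤ) (m : σ →₀ ℕ) (P : MvPolynomial σ R) :
    laurentCoeff e (monomial m 1 * P) = laurentCoeff (fun j => e j - m j) P := by
  induction P using MvPolynomial.induction_on' with
  | monomial d c =>
    rw [monomial_mul, one_mul, laurentCoeff_monomial, laurentCoeff_monomial]
    refine if_congr ?_ rfl rfl
    simp only [_root_.funext_iff, Finsupp.add_apply, Nat.cast_add, eq_sub_iff_add_eq, add_comm]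
  | add P Q hP hQ => rw [mul_add, map_add, map_add, hP, hQ]

theorem laurentCoeff_prod_X_pow_mul (e : σ → ℤ) (m : σ → ℕ) (P : MvPolynomial σ R) :
    laurentCoeff e ((∏ j, X j ^ m j) * P) = laurentCoeff (fun j => e j - m j) P := by
  have hm : ∏ j, (X j : MvPolynomial σ R) ^ m j =
      monomial (Finsupp.equivFunOnFinite.symm m) 1 := by
    rw [monomial_eq, C_1, one_mul, Finsupp.prod_fintype _ _ fun _ => pow_zero _]
    rfl
  rw [hm, laurentCoeff_monomial_mul]
  rfl

end LaurentCoeff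

section IsolateVar

variable {n : ℕ} {R : Type*} [CommSemiring R]

/-- A polynomial in `n + 1` variables, viewed as a univariate polynomial in `X k` whose coefficients
are polynomials in the other variables, reindexed by `k.succAbove`. -/
noncomputable def isolateVar (k : Fin (n + 1)) :
    MvPolynomial (Fin (n + 1)) R →ₐ[R] Polynomial (MvPolynomial (Fin n) R) :=
  aeval (k.insertNth Polynomial.X fun j => Polynomial.C (X j))

theorem isolateVar_X_self (k : Fin (n + 1)) :
    isolateVar k (X k : MvPolynomial _ R) = Polynomial.X := by
  simp [isolateVar]

theorem isolateVar_X_succAbove (k : Fin (n + 1)) (j : Fin n) :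
    isolateVar k (X (k.succAbove j) : MvPolynomial _ R) = Polynomial.C (X j) := by
  simp [isolateVar]

theorem isolateVar_monomial (k : Fin (n + 1)) (m : Fin (n + 1) →₀ ℕ) (c : R) :
    isolateVar k (monomial m c) = Polynomial.monomial (m k)
      (monomial (Finsupp.equivFunOnFinite.symm (k.removeNth m)) c) := by
  rw [isolateVar, aeval_monomial, Finsupp.prod_fintype _ _ fun _ => pow_zero _,
    Fin.prod_univ_succAbove _ k, monomial_eq, Finsupp.prod_fintype _ _ fun _ => pow_zero _,
    ← Polynomial.C_mul_X_pow_eq_monomial]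
  simp [Polynomial.algebraMap_apply, Fin.removeNth_apply, mul_comm, mul_left_comm]

theorem laurentCoeff_eq_laurentCoeff_isolateVar {e : Fin (n + 1) → ℤ} {k : Fin (n + 1)} {i : ℕ}
    (he : e k = i) (P : MvPolynomial (Fin (n + 1)) R) :
    laurentCoeff e P = laurentCoeff (k.removeNth e) ((isolateVar k P).coeff i) := by
  induction P using MvPolynomial.induction_on' with
  | monomial m c =>
    rw [isolateVar_monomial, Polynomial.coeff_monomial, apply_ite (laurentCoeff _), map_zero,
      laurentCoeff_monomial, laurentCoeff_monomial, ← ite_and]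
    refine if_congr ?_ rfl rfl
    simp only [_root_.funext_iff, Fin.forall_iff_succAbove k, he, Nat.cast_inj,
      Finsupp.equivFunOnFinite_symm_apply_apply, Fin.removeNth_apply]
  | add P Q hP hQ => rw [map_add, map_add, Polynomial.coeff_add, map_add, hP, hQ]

end IsolateVar

theorem sum_pow_div_prod_sub_eq_one {n : ℕ} {F : Type*} [Field F] {x : Fin (n + 1) → F}
    (hx : Function.Injective x) :
    ∑ k, x k ^ n / ∏ i ∈ Finset.univ.erase k, (x k - x i) = 1 := by
  have h := Lagrange.leadingCoeff_eq_sum (s := Finset.univ) hx.injOn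
    (P := (Polynomial.X ^ n : Polynomial F)) (by simp)
  simpa using h.symm

theorem coeff_zero_prod_C_sub_X_pow {ι R : Type*} [CommRing R] (s : Finset ι) (x : ι → R)
    (a : ι → ℕ) :
    (∏ j ∈ s, (Polynomial.C (x j) - Polynomial.X) ^ a j).coeff 0 = ∏ j ∈ s, x j ^ a j := by
  simp [Polynomial.coeff_zero_eq_eval_zero, Polynomial.eval_prod]

theorem coeff_one_prod_C_sub_X_pow {ι R : Type*} [DecidableEq ι] [CommRing R] (s : Finset ι)
    (x : ι → R) (a : ι → ℕ) :
    (∏ j ∈ s, (Polynomial.C (x j) - Polynomial.X) ^ a j).coeff 1 =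
      -∑ i ∈ s, a i * ∏ j ∈ s, x j ^ Function.update a i (a i - 1) j := by
  have hderiv := (Polynomial.coeff_derivative
    (∏ j ∈ s, (Polynomial.C (x j) - Polynomial.X) ^ a j) 0).symm
  rw [Nat.cast_zero, zero_add, zero_add, mul_one] at hderiv
  rw [hderiv, Polynomial.coeff_zero_eq_eval_zero, Polynomial.derivative_prod_finset,
    Polynomial.eval_finsetSum, ← Finset.sum_neg_distrib]
  refine Finset.sum_congr rfl fun i hi => ?_
  rw [prod_apply_update hi fun j m => x j ^ m]
  simp only [Polynomial.derivative_pow, map_natCast, Polynomial.derivative_sub,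
    Polynomial.derivative_C, Polynomial.derivative_X, zero_sub, Polynomial.eval_neg,
    Polynomial.eval_mul, Polynomial.eval_prod, Polynomial.eval_pow, Polynomial.eval_sub,
    Polynomial.eval_C, Polynomial.eval_X, sub_zero, Polynomial.eval_natCast,
    mul_neg, mul_one]
  ring

section DysonPoly

variable {n : ℕ}

theorem dysonPoly_eq_prod_mul_dysonPoly_update {a : Fin n → ℕ} {k : Fin n} (hk : a k ≠ 0) :
    dysonPoly n a = (∏ i ∈ Finset.univ.erase k, (X k - X i)) *
      dysonPoly n (Function.update a k (a k - 1)) := by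
  simp only [dysonPoly, Finset.prod_pow]
  rw [prod_apply_update (Finset.mem_univ k) fun j m =>
      (∏ i ∈ Finset.univ.erase j, (X j - X i)) ^ m, ← mul_assoc, mul_pow_sub_one hk,
    Finset.mul_prod_erase _ (fun j => (∏ i ∈ Finset.univ.erase j, (X j - X i)) ^ a j)
      (Finset.mem_univ k)]

theorem dysonPoly_eq_sum_update {a : Fin (n + 1) → ℕ} (ha : ∀ k, a k ≠ 0) :
    dysonPoly (n + 1) a =
      ∑ k, X k ^ n * dysonPoly (n + 1) (Function.update a k (a k - 1)) := by
  let toFrac := algebraMap (MvPolynomial (Fin (n + 1)) ℤ)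
    (FractionRing (MvPolynomial (Fin (n + 1)) ℤ))
  have htoFrac : Function.Injective toFrac := IsFractionRing.injective _ _
  have hx : Function.Injective fun k => toFrac (X k) := htoFrac.comp X_injective
  apply htoFrac
  rw [← one_mul (toFrac _), ← sum_pow_div_prod_sub_eq_one hx, Finset.sum_mul, map_sum]
  refine Finset.sum_congr rfl fun k _ => ?_
  have hne : ∏ i ∈ Finset.univ.erase k, (toFrac (X k) - toFrac (X i)) ≠ 0 :=
    Finset.prod_ne_zero_iff.mpr fun i hi =>
      sub_ne_zero.mpr (hx.ne (Finset.ne_of_mem_erase hi).symm)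
  rw [dysonPoly_eq_prod_mul_dysonPoly_update (ha k), map_mul, map_mul, map_prod, map_pow]
  simp only [map_sub]
  rw [← mul_assoc, div_mul_cancel₀ _ hne]

theorem isolateVar_dysonPoly {a : Fin (n + 1) → ℕ} {k : Fin (n + 1)} (hk : a k = 0) :
    isolateVar k (dysonPoly (n + 1) a) =
      (∏ j, (Polynomial.C (X j) - Polynomial.X) ^ k.removeNth a j) *
        Polynomial.C (dysonPoly n (k.removeNth a)) := by
  have herase (j : Fin n) : Finset.univ.erase (k.succAbove j) =
      insert k ((Finset.univ.erase j).map k.succAboveEmb) := by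
    ext i
    cases i using Fin.succAboveCases k <;> simp [Fin.succAbove_ne, Fin.ne_succAbove]
  simp only [dysonPoly, map_prod, map_pow, map_sub, Fin.prod_univ_succAbove _ k, hk, pow_zero,
    Finset.prod_const_one, one_mul, ← Finset.prod_mul_distrib]
  refine Finset.prod_congr rfl fun j _ => ?_
  rw [herase, Finset.prod_insert (by simp [Fin.succAbove_ne]), Finset.prod_map]
  simp [isolateVar_X_self, isolateVar_X_succAbove, Fin.removeNth_apply]

end DysonPoly

section DysonCT

variable {n : ℕ}

theorem dysonCT_eq_laurentCoeff (a : Fin n → ℕ) (b : Fin n → ℤ) :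
    dysonCT n a b = laurentCoeff (fun j => ((n : ℤ) - 1) * a j + b j) (dysonPoly n a) := by
  rw [dysonCT, laurentCoeff]
  split_ifs <;> rfl

theorem dysonCT_eq_sum_update {a : Fin (n + 1) → ℕ} (b : Fin (n + 1) → ℤ) (ha : ∀ k, a k ≠ 0) :
    dysonCT (n + 1) a b = ∑ k, dysonCT (n + 1) (Function.update a k (a k - 1)) b := by
  rw [dysonCT_eq_laurentCoeff, dysonPoly_eq_sum_update ha, map_sum]
  refine Finset.sum_congr rfl fun k _ => ?_
  rw [dysonCT_eq_laurentCoeff, X_pow_eq_monomial, laurentCoeff_monomial_mul]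
  congr 2 with j
  rcases eq_or_ne j k with rfl | hjk
  · rw [Finsupp.single_eq_same, Function.update_self, Nat.cast_pred (Nat.pos_of_ne_zero (ha j))]
    push_cast
    ring
  · simp [hjk]

theorem dysonCT_eq_zero_of_neg {a : Fin n → ℕ} {b : Fin n → ℤ} {k : Fin n} (ha : a k = 0)
    (hb : b k < 0) : dysonCT n a b = 0 := by
  rw [dysonCT_eq_laurentCoeff]
  exact laurentCoeff_of_neg (j := k) (by simpa [ha] using hb) _

theorem dysonCT_eq_dysonCT_removeNth {a : Fin (n + 1) → ℕ} {b : Fin (n + 1) → ℤ}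
    {k : Fin (n + 1)} (ha : a k = 0) (hb : b k = 0) :
    dysonCT (n + 1) a b = dysonCT n (k.removeNth a) (k.removeNth b) := by
  rw [dysonCT_eq_laurentCoeff, laurentCoeff_eq_laurentCoeff_isolateVar (k := k) (i := 0)
    (by simp [ha, hb]), isolateVar_dysonPoly ha, Polynomial.coeff_mul_C,
    coeff_zero_prod_C_sub_X_pow, laurentCoeff_prod_X_pow_mul, dysonCT_eq_laurentCoeff]
  congr 2 with j
  simp only [Fin.removeNth_apply, Nat.cast_add, Nat.cast_one]
  ring

theorem dysonCT_eq_neg_sum_removeNth {a : Fin (n + 1) → ℕ} {b : Fin (n + 1) → ℤ}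
    {k : Fin (n + 1)} (ha : a k = 0) (hb : b k = 1) :
    dysonCT (n + 1) a b =
      -∑ i, k.removeNth a i * dysonCT n (k.removeNth a) (k.removeNth b + Pi.single i 1) := by
  rw [dysonCT_eq_laurentCoeff, laurentCoeff_eq_laurentCoeff_isolateVar (k := k) (i := 1)
    (by simp [ha, hb]), isolateVar_dysonPoly ha, Polynomial.coeff_mul_C,
    coeff_one_prod_C_sub_X_pow, neg_mul, map_neg, Finset.sum_mul, map_sum]
  congr 1
  refine Finset.sum_congr rfl fun i _ => ?_
  rw [mul_assoc, ← nsmul_eq_mul, map_nsmul, nsmul_eq_mul, laurentCoeff_prod_X_pow_mul,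
    dysonCT_eq_laurentCoeff]
  rcases eq_or_ne (k.removeNth a i) 0 with hi | hi
  · simp [hi]
  congr 3 with j
  rcases eq_or_ne j i with rfl | hji
  · rw [Function.update_self, Nat.cast_pred (Nat.pos_of_ne_zero hi)]
    simp only [Fin.removeNth_apply, Pi.add_apply, Pi.single_eq_same, Nat.cast_succ]
    ring
  · simp only [Fin.removeNth_apply, Pi.add_apply, Pi.single_eq_of_ne hji,
      Function.update_of_ne hji, Nat.cast_succ]
    ring

end DysonCT

section ClosedForms

theorem prod_factorial_mul_dysonCT_zero {n : ℕ} (a : Fin n → ℕ) :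
    (∏ j, (a j)! : ℕ) * dysonCT n a 0 = (∑ j, a j)! := by
  induction n with
  | zero => simp [dysonCT, dysonPoly, coeff_one, eq_iff_true_of_subsingleton]
  | succ n ihn =>
    induction a using induction_on_update_pred with
    | boundary a k hk =>
      rw [dysonCT_eq_dysonCT_removeNth hk (Pi.zero_apply k),
        ← prod_factorial_removeNth_of_eq_zero hk, ← sum_removeNth_of_eq_zero hk]
      exact ihn _
    | step a ha iha =>
      have hsum : ∑ j, a j ≠ 0 := by
        rw [← sum_update_pred_add_one (ha 0)]
        exact Nat.succ_ne_zero _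
      have hterm (k : Fin (n + 1)) :
          ((∏ j, (a j)! : ℕ) : ℤ) * dysonCT (n + 1) (Function.update a k (a k - 1)) 0 =
            a k * (∑ j, a j - 1)! := by
        rw [← mul_prod_factorial_update_pred (ha k), Nat.cast_mul, mul_assoc, iha k,
          ← sum_update_pred_add_one (ha k), Nat.add_sub_cancel]
      rw [dysonCT_eq_sum_update 0 ha, Finset.mul_sum, Finset.sum_congr rfl fun k _ => hterm k,
        ← Finset.sum_mul]
      exact_mod_cast Nat.mul_factorial_pred hsum

/-- Sills' closed form for the coefficient `c_n(a; e_r - e_s)`, `r ≠ s`, cleared of denominators. -/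
def SillsFormula {n : ℕ} (a : Fin n → ℕ) (r s : Fin n) : Prop :=
  (1 + (∑ j, a j : ℕ) - (a s : ℤ)) * (∏ j, (a j)! : ℕ) *
      dysonCT n a (Pi.single r 1 - Pi.single s 1) = -(a s : ℤ) * (∑ j, a j)!

theorem sillsFormula_of_right_eq_zero {n : ℕ} {a : Fin n → ℕ} {r s : Fin n} (hrs : r ≠ s)
    (hs : a s = 0) : SillsFormula a r s := by
  rw [SillsFormula, dysonCT_eq_zero_of_neg hs (by simp [hrs.symm]), hs]
  simp

variable {n : ℕ} {a : Fin (n + 1) → ℕ} {k : Fin (n + 1)}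

theorem SillsFormula.of_removeNth (hk : a k = 0) {r s : Fin n}
    (h : SillsFormula (k.removeNth a) r s) :
    SillsFormula a (k.succAbove r) (k.succAbove s) := by
  have hb : k.removeNth (Pi.single (k.succAbove r) 1 - Pi.single (k.succAbove s) 1 : _ → ℤ) =
      Pi.single r 1 - Pi.single s 1 := by
    rw [← removeNth_single_succAbove k r, ← removeNth_single_succAbove k s]
    rfl
  rw [SillsFormula, dysonCT_eq_dysonCT_removeNth hk (by simp), hb,
    ← prod_factorial_removeNth_of_eq_zero hk, ← sum_removeNth_of_eq_zero hk]
  exact h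

theorem sillsFormula_of_left_eq_zero (hk : a k = 0) {s : Fin n}
    (h : ∀ i, i ≠ s → SillsFormula (k.removeNth a) i s) :
    SillsFormula a k (k.succAbove s) := by
  have hb : k.removeNth (Pi.single k 1 - Pi.single (k.succAbove s) 1 : _ → ℤ) =
      -Pi.single s 1 := by
    rw [← zero_sub, ← removeNth_single_succAbove k s, ← removeNth_single_self k 1]
    rfl
  rw [SillsFormula, dysonCT_eq_neg_sum_removeNth hk (by simp), hb,
    ← prod_factorial_removeNth_of_eq_zero hk, ← sum_removeNth_of_eq_zero hk,
    ← Fin.removeNth_apply k a s]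
  generalize k.removeNth a = a' at h ⊢
  have hterm (i : Fin n) :
      (1 + (∑ j, a' j : ℕ) - (a' s : ℤ)) * (∏ j, (a' j)! : ℕ) *
          (a' i * dysonCT n a' (-Pi.single s 1 + Pi.single i 1)) =
        a' s * (∑ j, a' j)! * ((if i = s then 1 + ((∑ j, a' j : ℕ) : ℤ) else 0) - (a' i : ℤ)) := by
    split_ifs with his
    · rw [his, neg_add_cancel]
      linear_combination (1 + (∑ j, a' j : ℕ) - (a' s : ℤ)) * a' s *
        prod_factorial_mul_dysonCT_zero a'
    · rw [neg_add_eq_sub]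
      have := h i his
      rw [SillsFormula] at this
      linear_combination (a' i : ℤ) * this
  rw [mul_neg, Finset.mul_sum, Finset.sum_congr rfl fun i _ => hterm i, ← Finset.mul_sum,
    Finset.sum_sub_distrib, Finset.sum_ite_eq' Finset.univ s, if_pos (Finset.mem_univ s),
    ← Nat.cast_sum]
  ring

theorem sillsFormula_of_update {r s : Fin (n + 1)} (hrs : r ≠ s) (ha : ∀ k, a k ≠ 0)
    (h : ∀ k, SillsFormula (Function.update a k (a k - 1)) r s) : SillsFormula a r s := by
  obtain ⟨N, hN⟩ : ∃ N, ∑ j, a j = N + 1 := ⟨_, (sum_update_pred_add_one (ha r)).symm⟩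
  have hrest : (N + 1 : ℤ) - a s ≠ 0 := by
    have hlt : a s < ∑ j, a j :=
      Finset.single_lt_sum hrs (Finset.mem_univ s) (Finset.mem_univ r)
        (Nat.pos_of_ne_zero (ha r)) fun _ _ _ => Nat.zero_le _
    omega
  -- The hypotheses carry the factors `|a| - a_s` (`k ≠ s`) and `|a| - a_s + 1` (`k = s`);
  -- multiplying by both makes the summands comparable.
  have hterm (k : Fin (n + 1)) :
      ((N + 1 : ℤ) - a s) * ((1 + (N + 1 : ℤ) - a s) * (∏ j, (a j)! : ℕ) *
          dysonCT (n + 1) (Function.update a k (a k - 1)) (Pi.single r 1 - Pi.single s 1)) =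
        -(a s * N !) * ((1 + (N + 1 : ℤ) - a s) * a k - if k = s then (N + 1 : ℤ) else 0) := by
    have hk := h k
    have hsum : ∑ j, Function.update a k (a k - 1) j = N :=
      Nat.succ_injective ((sum_update_pred_add_one (ha k)).trans hN)
    rw [SillsFormula, hsum] at hk
    rw [← mul_prod_factorial_update_pred (ha k), Nat.cast_mul]
    split_ifs with hks
    · subst hks
      rw [Function.update_self, Nat.cast_pred (Nat.pos_of_ne_zero (ha k))] at hk
      linear_combination ((N + 1 : ℤ) - a k) * a k * hk
    · rw [Function.update_of_ne (Ne.symm hks)] at hk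
      linear_combination (1 + (N + 1 : ℤ) - a s) * a k * hk
  apply mul_left_cancel₀ hrest
  rw [dysonCT_eq_sum_update _ ha, hN, Nat.cast_succ, Finset.mul_sum, Finset.mul_sum,
    Finset.sum_congr rfl fun k _ => hterm k, ← Finset.mul_sum, Finset.sum_sub_distrib,
    ← Finset.mul_sum, ← Nat.cast_sum, hN, Finset.sum_ite_eq' Finset.univ s,
    if_pos (Finset.mem_univ s), Nat.factorial_succ]
  push_cast
  ring

theorem dysonCT_three_one_zero_neg_one_general {n : ℕ} (a : Fin n → ℕ) {r s : Fin n}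
    (hrs : r ≠ s) :
    (1 + (∑ j, a j : ℕ) - (a s : ℤ)) * (∏ j, (a j)! : ℕ) *
      dysonCT n a (Pi.single r 1 - Pi.single s 1) = -(a s : ℤ) * (∑ j, a j)! := by
  change SillsFormula a r s
  induction n with
  | zero => exact r.elim0
  | succ n ihn =>
    induction a using induction_on_update_pred with
    | step a ha iha => exact sillsFormula_of_update hrs ha iha
    | boundary a k hk =>
      rcases eq_or_ne k s with rfl | hks
      · exact sillsFormula_of_right_eq_zero hrs hk
      obtain ⟨s, rfl⟩ := Fin.exists_succAbove_eq hks.symm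
      rcases eq_or_ne k r with rfl | hkr
      · exact sillsFormula_of_left_eq_zero hk fun i his => ihn _ his
      obtain ⟨r, rfl⟩ := Fin.exists_succAbove_eq hkr.symm
      exact .of_removeNth hk (ihn _ fun h => hrs (congrArg k.succAbove h))

end ClosedForms

/-- Closed form for `c_3(⟨a_1, a_2, a_3⟩; ⟨1, 0, -1⟩)`:
`(1+a_1+a_2) a_1! a_2! a_3! · c_3 = -a_3 (a_1+a_2+a_3)!`. -/
theorem dysonCT_three_one_zero_neg_one (a₁ a₂ a₃ : ℕ) :
    (1 + (a₁ : ℤ) + a₂) * (a₁.factorial : ℤ) * (a₂.factorial : ℤ) * (a₃.factorial : ℤ) *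
        dysonCT 3 ![a₁, a₂, a₃] ![1, 0, -1]
      = -(a₃ : ℤ) * ((a₁ + a₂ + a₃).factorial : ℤ) := by
  have hb : (![1, 0, -1] : Fin 3 → ℤ) = Pi.single 0 1 - Pi.single 2 1 := by decide
  have h := dysonCT_three_one_zero_neg_one_general ![a₁, a₂, a₃] (show (0 : Fin 3) ≠ 2 by decide)
  simp only [← hb, Fin.sum_univ_three, Fin.prod_univ_three, Matrix.cons_val] at h
  push_cast at h
  linear_combination h
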